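/- Let R be a 3-torsion free alternative ring. Then R is prime if and only if for all a, b ∈ R the following holds: if (a·x)·b = 0 for every x ∈ R, then a = 0 or b = 0. -/

import Mathlib

/-- The Lie bracket (commutator) in a not-necessarily-associative ring. -/
def lieBr {R : Type*} [NonUnitalNonAssocRing R] (x y : R) : R := x * y - y * x

/-- `R` is an alternative ring: `(x*x)*y = x*(x*y)` and `(y*x)*x = y*(x*x)`. -/
def IsAlternative (R : Type*) [NonUnitalNonAssocRing R] : Prop :=
  (∀ x y : R, x * x * y = x * (x * y)) ∧ (∀ x y : R, y * x * x = y * (x * x))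

/-- The centre of a not-necessarily-associative ring: elements `r` whose associators
`(r,x,y)`, `(x,r,y)`, `(x,y,r)` all vanish and which commute with everything. -/
def ringCenter (R : Type*) [NonUnitalNonAssocRing R] : Set R :=
  {r | (∀ x y : R, r * x * y = r * (x * y)) ∧ (∀ x y : R, x * r * y = x * (r * y)) ∧
       (∀ x y : R, x * y * r = x * (y * r)) ∧ (∀ x : R, r * x = x * r)}

/-- `e` is a nontrivial idempotent: idempotent, nonzero and not a multiplicative identity. -/
def IsNontrivialIdempotent {R : Type*} [NonUnitalNonAssocRing R] (e : R) : Prop :=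
  e * e = e ∧ e ≠ 0 ∧ ¬ (∀ x : R, e * x = x ∧ x * e = x)

/-- Peirce component `R₁₁` relative to the idempotent `e`. -/
def peirce11 {R : Type*} [NonUnitalNonAssocRing R] (e : R) : Set R :=
  {x | e * x = x ∧ x * e = x}

/-- Peirce component `R₁₂` relative to the idempotent `e`. -/
def peirce12 {R : Type*} [NonUnitalNonAssocRing R] (e : R) : Set R :=
  {x | e * x = x ∧ x * e = 0}

/-- Peirce component `R₂₁` relative to the idempotent `e`. -/
def peirce21 {R : Type*} [NonUnitalNonAssocRing R] (e : R) : Set R :=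
  {x | e * x = 0 ∧ x * e = x}

/-- Peirce component `R₂₂` relative to the idempotent `e`. -/
def peirce22 {R : Type*} [NonUnitalNonAssocRing R] (e : R) : Set R :=
  {x | e * x = 0 ∧ x * e = 0}

/-- Condition (i): if `a₁₁ + a₂₂` commutes with every element of `R₁₂`, it is central. -/
def CondI {R : Type*} [NonUnitalNonAssocRing R] (e : R) : Prop :=
  ∀ a b : R, a ∈ peirce11 e → b ∈ peirce22 e →
    (∀ m ∈ peirce12 e, lieBr (a + b) m = 0) → a + b ∈ ringCenter R

/-- Condition (ii): if `a₁₁ + a₂₂` commutes with every element of `R₂₁`, it is central. -/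
def CondII {R : Type*} [NonUnitalNonAssocRing R] (e : R) : Prop :=
  ∀ a b : R, a ∈ peirce11 e → b ∈ peirce22 e →
    (∀ m ∈ peirce21 e, lieBr (a + b) m = 0) → a + b ∈ ringCenter R

/-- A map `φ` is Lie multiplicative if `φ [x,y] = [φ x, φ y]`. -/
def IsLieMultiplicative {R R' : Type*} [NonUnitalNonAssocRing R] [NonUnitalNonAssocRing R']
    (φ : R → R') : Prop :=
  ∀ x y : R, φ (lieBr x y) = lieBr (φ x) (φ y)

/-- A map `D` is Lie triple derivable if
`D [[x,y],z] = [[D x,y],z] + [[x,D y],z] + [[x,y],D z]`. -/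
def IsLieTripleDerivable {R : Type*} [NonUnitalNonAssocRing R] (D : R → R) : Prop :=
  ∀ x y z : R, D (lieBr (lieBr x y) z) =
    lieBr (lieBr (D x) y) z + lieBr (lieBr x (D y)) z + lieBr (lieBr x y) (D z)

/-- A map `D` is Lie derivable if `D [x,y] = [D x, y] + [x, D y]`. -/
def IsLieDerivable {R : Type*} [NonUnitalNonAssocRing R] (D : R → R) : Prop :=
  ∀ x y : R, D (lieBr x y) = lieBr (D x) y + lieBr x (D y)

/-- `I` is a two-sided ideal (as a set) of the not-necessarily-associative ring `R`. -/
def IsTwoSidedIdealSet {R : Type*} [NonUnitalNonAssocRing R] (I : Set R) : Prop :=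
  (0 : R) ∈ I ∧ (∀ a b : R, a ∈ I → b ∈ I → a + b ∈ I) ∧ (∀ a : R, a ∈ I → -a ∈ I) ∧
  (∀ r a : R, a ∈ I → r * a ∈ I ∧ a * r ∈ I)

/-- `R` is prime: for any two nonzero two-sided ideals `A`, `B`, some product `a*b` with
`a ∈ A`, `b ∈ B` is nonzero (i.e. `A·B ≠ 0`). -/
def IsPrimeRing (R : Type*) [NonUnitalNonAssocRing R] : Prop :=
  ∀ A B : Set R, IsTwoSidedIdealSet A → IsTwoSidedIdealSet B → A ≠ {0} → B ≠ {0} →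
    ∃ a ∈ A, ∃ b ∈ B, a * b ≠ 0

/-- `R` is 3-torsion free: `3x = 0` implies `x = 0`. -/
def ThreeTorsionFree (R : Type*) [NonUnitalNonAssocRing R] : Prop :=
  ∀ x : R, x + x + x = 0 → x = 0

/-! The hard direction rests on nondegeneracy: `c x c = 0` for all `x` forces `c = 0`.

Call `a` and `b` orthogonal if all products of `a`, `b` and at most one further element vanish. Then
`C(x, y) = (xa)(yb)` is alternating and a derivation in each variable, and evaluating Kleinfeld's
function at `(xb, a, y, z)` in two ways gives `[C(x, y), z] = C([x, y], z)`. Hence the commutator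
with `C(x, y)` is a derivation, which says that three times each associator of `C(x, y)` is zero; so
`C(x, y)` is nuclear, and primeness makes it vanish. This is what is needed for the elements
orthogonal to `b` to form an ideal, so that primeness leaves no nonzero orthogonal pairs.
Nondegeneracy follows, because `c` is orthogonal to itself when `c² = 0` and `c x c = 0`.

If `(ax)b = 0` for all `x`, write `U_c z = c z c`; the identities
`U_{xy} z = ((x(yz))x)y = x((y(zx))y)` and nondegeneracy show successively that `ab = ba = 0`, that
`(xa)b = 0` and that `(bx)a = 0`, and so `a` and `b` are orthogonal. -/

section Prime

variable {R : Type*} [NonUnitalNonAssocRing R]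

theorem IsTwoSidedIdealSet.exists_ne_zero {I : Set R} (hI : IsTwoSidedIdealSet I)
    (hI0 : I ≠ {0}) : ∃ x ∈ I, x ≠ 0 := by
  by_contra! h
  exact hI0 (Set.eq_singleton_iff_unique_mem.mpr ⟨hI.1, h⟩)

theorem isPrimeRing_of_forall_mul_mul_eq_zero
    (h : ∀ a b : R, (∀ x : R, a * x * b = 0) → a = 0 ∨ b = 0) : IsPrimeRing R := by
  intro A B hA hB hA0 hB0
  obtain ⟨a, ha, ha0⟩ := hA.exists_ne_zero hA0
  obtain ⟨b, hb, hb0⟩ := hB.exists_ne_zero hB0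
  by_contra! hAB
  have haRb : ∀ x : R, a * x * b = 0 := fun x => hAB _ (hA.2.2.2 x a ha).2 b hb
  exact (h a b haRb).elim ha0 hb0

end Prime

namespace IsAlternative

variable {R : Type*} [NonUnitalNonAssocRing R]

theorem associator_self_left (hR : IsAlternative R) (x y : R) : associator x x y = 0 :=
  sub_eq_zero.mpr (hR.1 x y)

theorem associator_self_right (hR : IsAlternative R) (x y : R) : associator x y y = 0 :=
  sub_eq_zero.mpr (hR.2 y x)

theorem mul_mul_add_mul_mul_left (hR : IsAlternative R) (x y z : R) :
    x * y * z + y * x * z = x * (y * z) + y * (x * z) := by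
  have h := hR.1 (x + y) z
  simp only [mul_add, add_mul] at h
  linear_combination (norm := abel) h - hR.1 x z - hR.1 y z

theorem mul_mul_add_mul_mul_right (hR : IsAlternative R) (x y z : R) :
    x * y * z + x * z * y = x * (y * z) + x * (z * y) := by
  have h := hR.2 (y + z) x
  simp only [mul_add, add_mul] at h
  linear_combination (norm := abel) h - hR.2 y x - hR.2 z x

theorem associator_swap_left (hR : IsAlternative R) (x y z : R) :
    associator x y z = -associator y x z := by
  simp only [associator_apply]
  linear_combination (norm := abel) hR.mul_mul_add_mul_mul_left x y z

theorem associator_swap_right (hR : IsAlternative R) (x y z : R) :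
    associator x y z = -associator x z y := by
  simp only [associator_apply]
  linear_combination (norm := abel) hR.mul_mul_add_mul_mul_right x y z

theorem associator_rotate (hR : IsAlternative R) (x y z : R) :
    associator x y z = associator y z x := by
  rw [hR.associator_swap_left x y z, hR.associator_swap_right y x z, neg_neg]

theorem associator_swap_outer (hR : IsAlternative R) (x y z : R) :
    associator x y z = -associator z y x := by
  rw [hR.associator_rotate x y z, hR.associator_swap_left y z x]

theorem flexible (hR : IsAlternative R) (x y : R) : x * y * x = x * (y * x) :=
  sub_eq_zero.mp <| show associator x y x = 0 by
    rw [hR.associator_rotate, hR.associator_self_right]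

end IsAlternative

/-- Kleinfeld's function `f(w, x, y, z) = (wx, y, z) - x(w, y, z) - (x, y, z)w`, which measures how
far the associator is from being a derivation in its first argument. It is alternating in an
alternative ring. -/
def kleinfeld {R : Type*} [NonUnitalNonAssocRing R] (w x y z : R) : R :=
  associator (w * x) y z - x * associator w y z - associator x y z * w

namespace IsAlternative

variable {R : Type*} [NonUnitalNonAssocRing R]

theorem kleinfeld_swap_right (hR : IsAlternative R) (w x y z : R) :
    kleinfeld w x y z = -kleinfeld w x z y := by
  simp only [kleinfeld, hR.associator_swap_right _ y z, mul_neg, neg_mul]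
  abel

theorem kleinfeld_self_right (hR : IsAlternative R) (w x y : R) : kleinfeld w x y y = 0 := by
  simp only [kleinfeld, hR.associator_self_right, mul_zero, zero_mul, sub_zero]

theorem kleinfeld_sub_add_kleinfeld (hR : IsAlternative R) (w x y z : R) :
    kleinfeld w x y z - kleinfeld x y z w + kleinfeld y z w x =
      lieBr w (associator x y z) - lieBr x (associator y z w)
        + lieBr y (associator z w x) - lieBr z (associator w x y) := by
  have h := associator_cocycle w x y z
  rw [hR.associator_rotate w (x * y) z, hR.associator_rotate w x (y * z),
    hR.associator_rotate x (y * z) w] at h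
  simp only [kleinfeld, lieBr]
  rw [hR.associator_rotate w y z, hR.associator_rotate x z w, hR.associator_rotate y w x]
  linear_combination (norm := abel) -h

/-- The right-hand side of `kleinfeld_sub_add_kleinfeld` changes sign under a cyclic shift; adding
two consecutive shifts of the left-hand side telescopes. -/
theorem kleinfeld_rotate (hR : IsAlternative R) (w x y z : R) :
    kleinfeld w x y z = -kleinfeld z w x y := by
  have h := hR.kleinfeld_sub_add_kleinfeld w x y z
  have h' := hR.kleinfeld_sub_add_kleinfeld x y z w
  linear_combination (norm := abel) h + h'

theorem kleinfeld_swap_middle (hR : IsAlternative R) (w x y z : R) :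
    kleinfeld w x y z = -kleinfeld w y x z := by
  rw [hR.kleinfeld_rotate w x y z, hR.kleinfeld_swap_right z w x y, hR.kleinfeld_rotate w y x z]

theorem kleinfeld_swap_left (hR : IsAlternative R) (w x y z : R) :
    kleinfeld w x y z = -kleinfeld x w y z := by
  rw [hR.kleinfeld_rotate w x y z, hR.kleinfeld_swap_middle z w x y, hR.kleinfeld_rotate x w y z]

theorem kleinfeld_reverse (hR : IsAlternative R) (w x y z : R) :
    kleinfeld w x y z = kleinfeld z y x w := by
  rw [hR.kleinfeld_rotate w x y z, hR.kleinfeld_swap_right z w x y,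
    hR.kleinfeld_swap_middle z w y x, hR.kleinfeld_swap_right z y w x, neg_neg, neg_neg]

theorem associator_mul_right_self (hR : IsAlternative R) (x y z : R) :
    associator x (y * x) z = x * associator x y z := by
  have h : kleinfeld y x x z = 0 := by
    rw [hR.kleinfeld_rotate, hR.kleinfeld_self_right, neg_zero]
  rw [kleinfeld, hR.associator_self_left, hR.associator_swap_left (y * x),
    hR.associator_swap_left y, zero_mul, mul_neg] at h
  linear_combination (norm := abel) -h

theorem associator_mul_left_self (hR : IsAlternative R) (x y z : R) :
    associator x (x * y) z = associator x y z * x := by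
  have h : kleinfeld x y x z = 0 := by
    rw [hR.kleinfeld_swap_left, hR.kleinfeld_rotate, hR.kleinfeld_self_right, neg_zero, neg_zero]
  rw [kleinfeld, hR.associator_self_left, hR.associator_swap_left (x * y),
    hR.associator_swap_left y, mul_zero, neg_mul] at h
  linear_combination (norm := abel) -h

theorem associator_mul_right_add (hR : IsAlternative R) (w x y z : R) :
    associator x (y * w) z + associator w (y * x) z =
      w * associator x y z + x * associator w y z := by
  have h := hR.associator_mul_right_self (x + w) y z
  have hx := hR.associator_mul_right_self x y z
  have hw := hR.associator_mul_right_self w y z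
  simp only [associator_apply, add_mul, mul_add, mul_sub] at h hx hw ⊢
  linear_combination (norm := abel) h - hx - hw

theorem associator_mul_left_add (hR : IsAlternative R) (w x y z : R) :
    associator x (w * y) z + associator w (x * y) z =
      associator x y z * w + associator w y z * x := by
  have h := hR.associator_mul_left_self (x + w) y z
  have hx := hR.associator_mul_left_self x y z
  have hw := hR.associator_mul_left_self w y z
  simp only [associator_apply, add_mul, mul_add, sub_mul] at h hx hw ⊢
  linear_combination (norm := abel) h - hx - hw

theorem middle_moufang (hR : IsAlternative R) (x y z : R) :
    x * y * (z * x) = x * (y * z) * x := by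
  have h := hR.associator_mul_left_self x y z
  rw [hR.associator_rotate] at h
  simp only [associator_apply, sub_mul] at h
  linear_combination (norm := abel) -h

theorem left_moufang (hR : IsAlternative R) (x y z : R) :
    x * (y * (x * z)) = x * y * x * z := by
  have hy := hR.associator_mul_left_self x y z
  have hz := hR.associator_mul_left_self x z y
  rw [hR.associator_swap_left] at hy
  rw [hR.associator_swap_right, hR.associator_swap_right x z y, neg_mul] at hz
  simp only [associator_apply] at hy hz
  linear_combination (norm := abel) hy + hz

theorem right_moufang (hR : IsAlternative R) (x y z : R) :
    z * x * y * x = z * (x * y * x) := by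
  have hy := hR.associator_mul_right_self x y z
  have hz := hR.associator_mul_right_self x z y
  rw [← hR.associator_rotate] at hy
  rw [hR.associator_rotate, hR.associator_swap_right, hR.associator_swap_right x z y, mul_neg] at hz
  rw [hR.associator_swap_right] at hz
  simp only [associator_apply] at hy hz
  rw [hR.flexible x y]
  linear_combination (norm := abel) hy + hz

theorem middle_moufang_add (hR : IsAlternative R) (w x y z : R) :
    x * y * (z * w) + w * y * (z * x) = x * (y * z) * w + w * (y * z) * x := by
  have h := hR.middle_moufang (x + w) y z
  simp only [mul_add, add_mul] at h
  linear_combination (norm := abel) h - hR.middle_moufang x y z - hR.middle_moufang w y z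

theorem left_moufang_add (hR : IsAlternative R) (w x y z : R) :
    x * (y * (w * z)) + w * (y * (x * z)) = x * y * w * z + w * y * x * z := by
  have h := hR.left_moufang (x + w) y z
  simp only [mul_add, add_mul] at h
  linear_combination (norm := abel) h - hR.left_moufang x y z - hR.left_moufang w y z

theorem right_moufang_add (hR : IsAlternative R) (w x y z : R) :
    z * x * y * w + z * w * y * x = z * (x * y * w) + z * (w * y * x) := by
  have h := hR.right_moufang (x + w) y z
  simp only [mul_add, add_mul] at h
  linear_combination (norm := abel) h - hR.right_moufang x y z - hR.right_moufang w y z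

theorem mul_mul_mul_self_eq_right (hR : IsAlternative R) (x y z : R) :
    x * y * z * (x * y) = x * (y * z) * x * y := by
  have h := hR.middle_moufang_add y (x * y) z x
  have hsq : y * z * (x * (x * y)) = y * (z * x) * (x * y) := by
    rw [← hR.1, hR.middle_moufang, hR.middle_moufang, hR.2]
  rw [hsq, hR.middle_moufang x y z] at h
  exact add_right_cancel h

theorem mul_mul_mul_self_eq_left (hR : IsAlternative R) (x y z : R) :
    x * y * z * (x * y) = x * (y * (z * x) * y) := by
  have h := hR.middle_moufang_add (x * y) x y z
  have hout : x * (y * z) * (x * y) + x * y * (y * z) * x =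
      x * (y * z * (x * y)) + x * y * (y * z * x) := by
    have e := hR.associator_swap_outer x (y * z) (x * y)
    simp only [associator_apply] at e
    linear_combination (norm := abel) e
  have hsq : x * y * y * (z * x) = x * y * (y * z * x) := by
    rw [hR.2, hR.middle_moufang, hR.middle_moufang, hR.1]
  rw [hout, hsq, hR.middle_moufang y z x] at h
  rw [hR.flexible]
  exact add_right_cancel h

end IsAlternative

/-- `a` and `b` are orthogonal if every product of `a`, `b` and at most one further element
vanishes. Each field is named after the product in question, a factor in brackets being set off by
an underscore: `a_xb` is about `a * (x * b)`. -/
structure Orthogonal {R : Type*} [NonUnitalNonAssocRing R] (a b : R) : Prop where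
  ab : a * b = 0
  ba : b * a = 0
  axb : ∀ x : R, a * x * b = 0
  a_xb : ∀ x : R, a * (x * b) = 0
  a_bx : ∀ x : R, a * (b * x) = 0
  xab : ∀ x : R, x * a * b = 0
  bxa : ∀ x : R, b * x * a = 0
  b_xa : ∀ x : R, b * (x * a) = 0
  b_ax : ∀ x : R, b * (a * x) = 0
  xba : ∀ x : R, x * b * a = 0

/-- The biadditive map `C(x, y) = (xa)(yb)`, the obstruction to `xa` being orthogonal to `b` when
`a` is. -/
def crossMul {R : Type*} [NonUnitalNonAssocRing R] (a b x y : R) : R := x * a * (y * b)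

/-- The map `m(x, y, z) = (xb)(a, y, z) + C(y, z)x`, which is alternating for orthogonal `a` and
`b`; the Jacobi identity for `crossMul` is read off from it. -/
def crossTriple {R : Type*} [NonUnitalNonAssocRing R] (a b x y z : R) : R :=
  x * b * associator a y z + crossMul a b y z * x

theorem IsAlternative.orthogonal {R : Type*} [NonUnitalNonAssocRing R] (hR : IsAlternative R)
    {a b : R} (ab : a * b = 0) (ba : b * a = 0) (axb : ∀ x : R, a * x * b = 0)
    (a_xb : ∀ x : R, a * (x * b) = 0) (bxa : ∀ x : R, b * x * a = 0) : Orthogonal a b := by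
  have abx (x : R) : associator a b x = 0 := by
    rw [hR.associator_swap_right, associator_apply, axb, a_xb, sub_zero, neg_zero]
  have bax (x : R) : associator b a x = 0 := by rw [hR.associator_swap_left, abx, neg_zero]
  have xab (x : R) : associator x a b = 0 := by rw [hR.associator_rotate, abx]
  have xba (x : R) : associator x b a = 0 := by rw [hR.associator_rotate, bax]
  have bxa' (x : R) : associator b x a = 0 := by rw [hR.associator_swap_right, bax, neg_zero]
  simp only [associator_apply, ab, ba, bxa, zero_mul, mul_zero, zero_sub, sub_zero,
    neg_eq_zero] at abx bax xab xba bxa'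
  exact ⟨ab, ba, axb, a_xb, abx, xab, bxa, bxa', bax, xba⟩

namespace IsAlternative

variable {R : Type*} [NonUnitalNonAssocRing R] {a b : R}

theorem crossMul_self (hR : IsAlternative R) (a_xb : ∀ x : R, a * (x * b) = 0)
    (hab : ∀ x : R, associator x a b = 0) (x : R) : crossMul a b x x = 0 := by
  have hxax : x * a * x * b = 0 := by rw [← hR.left_moufang, a_xb, mul_zero]
  have hassoc : associator (x * a) x b = 0 := by
    rw [hR.associator_swap_left, hR.associator_mul_left_self, hab, zero_mul, neg_zero]
  rwa [associator_apply, hxax, zero_sub, neg_eq_zero] at hassoc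

theorem crossMul_swap (hR : IsAlternative R) (a_xb : ∀ x : R, a * (x * b) = 0)
    (hab : ∀ x : R, associator x a b = 0) (x y : R) : crossMul a b x y = -crossMul a b y x := by
  have hadd := hR.crossMul_self a_xb hab (x + y)
  have hx := hR.crossMul_self a_xb hab x
  have hy := hR.crossMul_self a_xb hab y
  simp only [crossMul, add_mul, mul_add] at hadd hx hy ⊢
  linear_combination (norm := abel) hadd - hx - hy

end IsAlternative

namespace Orthogonal

variable {R : Type*} [NonUnitalNonAssocRing R] {a b : R}

theorem symm (h : Orthogonal a b) : Orthogonal b a :=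
  ⟨h.ba, h.ab, h.bxa, h.b_xa, h.b_ax, h.xba, h.axb, h.a_xb, h.a_bx, h.xab⟩

theorem crossMul_swap (h : Orthogonal a b) (hR : IsAlternative R) (x y : R) :
    crossMul a b x y = -crossMul a b y x :=
  hR.crossMul_swap h.a_xb (fun x => by simp [associator_apply, h.xab, h.ab]) x y

theorem associator_x_a_yb (h : Orthogonal a b) (x y : R) :
    associator x a (y * b) = crossMul a b x y := by
  rw [associator_apply, h.a_xb, mul_zero, sub_zero, crossMul]

theorem associator_xb_a_y (h : Orthogonal a b) (hR : IsAlternative R) (x y : R) :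
    associator (x * b) a y = crossMul a b x y := by
  rw [hR.associator_swap_outer, h.associator_x_a_yb, ← h.crossMul_swap hR]

theorem xb_ay (h : Orthogonal a b) (hR : IsAlternative R) (x y : R) :
    x * b * (a * y) = -crossMul a b x y := by
  rw [← h.associator_xb_a_y hR, associator_apply, h.xba, zero_mul, zero_sub, neg_neg]

theorem a_xby (h : Orthogonal a b) (hR : IsAlternative R) (x y : R) :
    a * (x * b * y) = crossMul a b x y := by
  rw [← h.associator_xb_a_y hR, hR.associator_swap_left, associator_apply, h.a_xb, zero_mul,
    zero_sub, neg_neg]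

theorem ax_by (h : Orthogonal a b) (hR : IsAlternative R) (x y : R) :
    a * x * (b * y) = crossMul a b x y := by
  have hmoufang := hR.middle_moufang_add y a x b
  have halt := hR.mul_mul_add_mul_mul_right y (x * b) a
  rw [h.ba, h.a_xb, zero_mul, mul_zero] at hmoufang
  rw [h.a_xb, h.xba, mul_zero, add_zero] at halt
  have hswap : y * a * (x * b) = -crossMul a b x y := h.crossMul_swap hR y x
  linear_combination (norm := abel) hmoufang + halt - hswap

theorem a_byx (h : Orthogonal a b) (hR : IsAlternative R) (x y : R) :
    a * (b * y * x) = crossMul b a x y := by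
  have hassoc := hR.associator_swap_left a (b * y) x
  simp only [associator_apply, h.a_bx, h.bxa, zero_mul, h.symm.ax_by hR] at hassoc
  rw [h.symm.crossMul_swap hR x y]
  linear_combination (norm := abel) -hassoc

theorem axyb (h : Orthogonal a b) (hR : IsAlternative R) (x y : R) :
    a * x * y * b = crossMul b a x y := by
  have hmoufang := hR.right_moufang_add b x y a
  rwa [h.ab, h.a_xb, zero_mul, zero_mul, h.a_byx hR, add_zero, zero_add] at hmoufang

theorem associator_mul (h : Orthogonal a b) (hR : IsAlternative R) (x y : R) :
    associator b x y * a = crossMul a b x y := by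
  rw [associator_apply, sub_mul, h.bxa, sub_zero, h.symm.axyb hR]

theorem mul_associator (h : Orthogonal a b) (hR : IsAlternative R) (x y : R) :
    a * associator b x y = -crossMul b a x y := by
  rw [associator_apply, mul_sub, h.a_bx, sub_zero, h.a_byx hR, h.symm.crossMul_swap hR]

theorem crossMul_mul_right (h : Orthogonal a b) (hR : IsAlternative R) (x y z : R) :
    crossMul a b x (y * z) = y * crossMul a b x z + crossMul a b x y * z := by
  have hmoufang := hR.left_moufang_add (x * b) y a z
  have hyx : y * a * (x * b) = -crossMul a b x y := h.crossMul_swap hR y x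
  rw [h.a_xby hR, h.xb_ay hR, h.xba, hyx, zero_mul, zero_mul, neg_mul] at hmoufang
  linear_combination (norm := abel) -hmoufang

theorem crossMul_mul_left (h : Orthogonal a b) (hR : IsAlternative R) (x y z : R) :
    crossMul a b (x * y) z = x * crossMul a b y z + crossMul a b x z * y := by
  rw [h.crossMul_swap hR, h.crossMul_mul_right hR, h.crossMul_swap hR z y, h.crossMul_swap hR z x,
    mul_neg, neg_mul, ← neg_add, neg_neg]

theorem crossTriple_eq_associator_mul_sub (h : Orthogonal a b) (hR : IsAlternative R)
    (x y z : R) :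
    crossTriple a b x y z = associator b z x * (a * y) - y * crossMul a b z x := by
  have hxb : associator (x * b) (a * y) z =
      y * crossMul a b x z + x * b * associator y a z := by
    have e := hR.associator_mul_right_add y (x * b) a z
    rwa [h.a_xb, associator_apply y 0 z, mul_zero, zero_mul, mul_zero, sub_zero, add_zero,
      h.associator_xb_a_y hR] at e
  have hay : associator (a * y) (x * b) z =
      associator (a * y) b z * x + associator x b z * (a * y) := by
    have e := hR.associator_mul_left_add x (a * y) b z
    rwa [h.axb, associator_apply x 0 z, mul_zero, zero_mul, mul_zero, sub_zero, add_zero] at e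
  have hayb : associator (a * y) b z = -crossMul a b y z := by
    rw [associator_apply, h.axb, zero_mul, zero_sub, h.ax_by hR]
  rw [hR.associator_swap_left, hay, hayb, hR.associator_swap_left y, hR.associator_rotate x,
    h.crossMul_swap hR x z] at hxb
  simp only [mul_neg, neg_mul] at hxb
  rw [crossTriple]
  linear_combination (norm := abel) hxb

theorem crossTriple_swap_right (h : Orthogonal a b) (hR : IsAlternative R) (x y z : R) :
    crossTriple a b x y z = -crossTriple a b x z y := by
  rw [crossTriple, hR.associator_swap_right, h.crossMul_swap hR, mul_neg, neg_mul, ← neg_add,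
    crossTriple]

theorem crossTriple_swap_outer (h : Orthogonal a b) (hR : IsAlternative R) (x y z : R) :
    crossTriple a b x y z = -crossTriple a b z y x := by
  rw [h.crossTriple_eq_associator_mul_sub hR, hR.associator_swap_right, h.crossMul_swap hR,
    mul_neg, neg_mul, ← neg_sub', h.crossTriple_eq_associator_mul_sub hR]

theorem crossTriple_rotate (h : Orthogonal a b) (hR : IsAlternative R) (x y z : R) :
    crossTriple a b x y z = crossTriple a b z x y := by
  rw [h.crossTriple_swap_outer hR, h.crossTriple_swap_right hR, neg_neg]

theorem crossTriple_swap_left (h : Orthogonal a b) (hR : IsAlternative R) (x y z : R) :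
    crossTriple a b x y z = -crossTriple a b y x z := by
  rw [h.crossTriple_rotate hR x, h.crossTriple_swap_outer hR z, h.crossTriple_swap_right hR y,
    h.crossTriple_swap_right hR y]

theorem crossTriple_sub_crossTriple (h : Orthogonal a b) (hR : IsAlternative R) (x y z : R) :
    crossTriple a b x y z - crossTriple b a x y z =
      lieBr (crossMul a b y z) x - lieBr (crossMul b a y z) x := by
  have hba : crossTriple b a x y z =
      associator a y z * (b * x) - x * crossMul b a y z := by
    rw [h.symm.crossTriple_rotate hR, h.symm.crossTriple_eq_associator_mul_sub hR]
  have hassoc := hR.associator_swap_outer (associator a y z) b x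
  rw [associator_apply _ b, associator_apply x b, h.symm.associator_mul hR,
    h.symm.mul_associator hR, mul_neg] at hassoc
  rw [hba]
  simp only [crossTriple, lieBr]
  linear_combination (norm := abel) hassoc

theorem kleinfeld_xb_a_eq_lieBr_add_lieBr (h : Orthogonal a b) (hR : IsAlternative R)
    (x y z : R) :
    kleinfeld (x * b) a y z = lieBr (crossMul a b x y) z + lieBr (crossMul a b z x) y := by
  rw [hR.kleinfeld_reverse, kleinfeld, h.associator_x_a_yb, h.associator_x_a_yb,
    h.associator_x_a_yb, h.crossMul_mul_left hR, h.crossMul_swap hR y x]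
  simp only [lieBr, mul_neg, neg_mul]
  abel

theorem associator_mul_mul (h : Orthogonal a b) (hR : IsAlternative R) (x y z : R) :
    y * associator b x z * a =
      y * crossMul a b x z + lieBr (crossMul b a x z) y - crossTriple b a y x z := by
  have e := hR.mul_mul_add_mul_mul_right y (associator b x z) a
  rw [h.associator_mul hR, h.mul_associator hR, mul_neg] at e
  rw [crossTriple, lieBr]
  linear_combination (norm := abel) e

theorem associator_xb_mul (h : Orthogonal a b) (hR : IsAlternative R) (x y z : R) :
    associator (x * b) y z * a = crossMul a b (x * y) z - y * associator b x z * a := by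
  have e := congrArg (· * a) (hR.associator_mul_right_add b y x z)
  simp only [hR.associator_swap_left y (x * b), add_mul, neg_mul, h.associator_mul hR, h.bxa,
    zero_add] at e
  linear_combination (norm := abel) -e

theorem kleinfeld_xb_a_eq_neg_lieBr (h : Orthogonal a b) (hR : IsAlternative R) (x y z : R) :
    kleinfeld (x * b) a y z = -lieBr (crossMul a b y z) x := by
  have hkleinfeld : kleinfeld (x * b) a y z =
      x * b * associator a y z + associator (x * b) y z * a := by
    rw [hR.kleinfeld_swap_left, kleinfeld, h.a_xb,
      show associator 0 y z = 0 by simp [associator_apply]]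
    abel
  have hsub := h.crossTriple_sub_crossTriple hR y x z
  rw [h.crossTriple_swap_left hR y, h.symm.crossTriple_swap_left hR y] at hsub
  rw [hkleinfeld, h.associator_xb_mul hR, h.associator_mul_mul hR, h.crossMul_mul_left hR,
    h.symm.crossTriple_swap_left hR y]
  simp only [crossTriple, lieBr] at hsub ⊢
  linear_combination (norm := abel) -hsub

theorem lieBr_crossMul (h : Orthogonal a b) (hR : IsAlternative R) (x y z : R) :
    lieBr (crossMul a b x y) z = crossMul a b (lieBr x y) z := by
  have hjacobi : lieBr (crossMul a b x y) z + lieBr (crossMul a b z x) y =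
      -lieBr (crossMul a b y z) x := by
    rw [← h.kleinfeld_xb_a_eq_lieBr_add_lieBr hR, h.kleinfeld_xb_a_eq_neg_lieBr hR]
  have hsub : crossMul a b (lieBr x y) z = crossMul a b (x * y) z - crossMul a b (y * x) z := by
    simp only [crossMul, lieBr, sub_mul]
  rw [hsub, h.crossMul_mul_left hR, h.crossMul_mul_left hR, h.crossMul_swap hR x z]
  simp only [lieBr, mul_neg, neg_mul] at hjacobi ⊢
  linear_combination (norm := abel) hjacobi

theorem associator_crossMul (h : Orthogonal a b) (hR : IsAlternative R)
    (htf : ThreeTorsionFree R) (x y z w : R) : associator z w (crossMul a b x y) = 0 := by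
  apply htf
  have hz := h.lieBr_crossMul hR x y z
  have hw := h.lieBr_crossMul hR x y w
  have hzw := h.lieBr_crossMul hR x y (z * w)
  rw [h.crossMul_mul_right hR, ← hz, ← hw] at hzw
  generalize crossMul a b x y = k at hzw ⊢
  have hderiv : associator z w k - associator z k w + associator k z w = 0 := by
    simp only [lieBr, mul_sub, sub_mul] at hzw
    simp only [associator_apply]
    linear_combination (norm := abel) -hzw
  rwa [hR.associator_swap_right z k w, sub_neg_eq_add, hR.associator_rotate k z w] at hderiv

end Orthogonal

section PrimeAlternative

variable {R : Type*} [NonUnitalNonAssocRing R]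

theorem IsTwoSidedIdealSet.rightAnnihilator (hR : IsAlternative R) {I : Set R}
    (hI : IsTwoSidedIdealSet I) : IsTwoSidedIdealSet {x : R | ∀ p ∈ I, p * x = 0} := by
  refine ⟨fun p _ => mul_zero p, fun x y hx hy p hp => ?_, fun x hx p hp => ?_, fun r x hx => ?_⟩
  · rw [mul_add, hx p hp, hy p hp, add_zero]
  · rw [mul_neg, hx p hp, neg_zero]
  have hassoc : ∀ p ∈ I, associator r p x = 0 := fun p hp => by
    rw [associator_apply, hx p hp, hx _ (hI.2.2.2 r p hp).1, mul_zero, sub_zero]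
  refine ⟨fun p hp => ?_, fun p hp => ?_⟩
  · have e := hassoc p hp
    rwa [hR.associator_swap_left, associator_apply, hx _ (hI.2.2.2 r p hp).2, zero_sub,
      neg_neg] at e
  · have e := hassoc p hp
    rwa [hR.associator_rotate, associator_apply, hx p hp, zero_mul, zero_sub, neg_eq_zero] at e

theorem IsPrimeRing.eq_zero_or_eq_zero_of_mul_eq_zero (hP : IsPrimeRing R) (hR : IsAlternative R)
    {I : Set R} (hI : IsTwoSidedIdealSet I) {a b : R} (ha : a ∈ I) (hb : ∀ p ∈ I, p * b = 0) :
    a = 0 ∨ b = 0 := by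
  by_contra! hne
  have ne_singleton {J : Set R} {c : R} (hc : c ∈ J) (hc0 : c ≠ 0) : J ≠ {0} := by
    rintro rfl
    exact hc0 hc
  obtain ⟨p, hp, q, hq, hpq⟩ := hP I _ hI (hI.rightAnnihilator hR) (ne_singleton ha hne.1)
    (ne_singleton hb hne.2)
  exact hpq (hq p hp)

theorem associator_mul_of_nuclear {n : R} (hn : ∀ x y : R, associator x y n = 0) (x y z : R) :
    associator x y z * n = associator x y (z * n) := by
  have e := associator_cocycle x y z n
  rw [hn, hn, hn, mul_zero] at e
  linear_combination (norm := abel) e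

theorem IsAlternative.isTwoSidedIdealSet_of_nuclear (hR : IsAlternative R) {n : R}
    (hn : ∀ x y : R, associator x y n = 0) :
    IsTwoSidedIdealSet {p : R | p * n = 0 ∧ ∀ x, p * x * n = 0} := by
  have mul_mul_n (x y : R) : x * y * n = x * (y * n) := sub_eq_zero.mp (hn x y)
  have associator_mul {p : R} (hp : p * n = 0) (x y : R) : associator x y p * n = 0 := by
    rw [associator_mul_of_nuclear hn, hp, associator_apply, mul_zero, mul_zero, mul_zero,
      sub_zero]
  refine ⟨by simp, ?_, ?_, ?_⟩
  · rintro p q ⟨hp, hpx⟩ ⟨hq, hqx⟩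
    exact ⟨by rw [add_mul, hp, hq, add_zero],
      fun x => by rw [add_mul, add_mul, hpx, hqx, add_zero]⟩
  · rintro p ⟨hp, hpx⟩
    exact ⟨by rw [neg_mul, hp, neg_zero], fun x => by rw [neg_mul, neg_mul, hpx, neg_zero]⟩
  · rintro r p ⟨hp, hpx⟩
    refine ⟨⟨by rw [mul_mul_n, hp, mul_zero], fun x => ?_⟩, hpx r, fun x => ?_⟩
    · have e := associator_mul hp x r
      rwa [hR.associator_rotate, associator_apply, sub_mul, mul_mul_n r, hpx, mul_zero,
        sub_zero] at e
    · have e := associator_mul hp r x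
      rwa [← hR.associator_rotate, associator_apply, sub_mul, hpx, sub_zero] at e

theorem IsPrimeRing.eq_zero_of_nuclear (hP : IsPrimeRing R) (hR : IsAlternative R) {n : R}
    (hn : ∀ x y : R, associator x y n = 0) (hsq : n * n = 0) (hnxn : ∀ x : R, n * x * n = 0) :
    n = 0 :=
  or_self_iff.mp <| hP.eq_zero_or_eq_zero_of_mul_eq_zero hR (hR.isTwoSidedIdealSet_of_nuclear hn)
    ⟨hsq, hnxn⟩ fun _ hp => hp.1

end PrimeAlternative

namespace Orthogonal

variable {R : Type*} [NonUnitalNonAssocRing R] {a b : R}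

theorem crossMul_eq_zero (h : Orthogonal a b) (hR : IsAlternative R) (htf : ThreeTorsionFree R)
    (hP : IsPrimeRing R) (x y : R) : crossMul a b x y = 0 := by
  have mul_mul_crossMul (u v x y : R) : u * v * crossMul a b x y = u * (v * crossMul a b x y) :=
    sub_eq_zero.mp (h.associator_crossMul hR htf x y u v)
  have b_mul_crossMul (x y : R) : b * crossMul a b x y = 0 := by rw [← h.a_xby hR, h.b_ax]
  have crossMul_mul (u v x y : R) : crossMul a b u v * crossMul a b x y = 0 := by
    rw [crossMul, mul_mul_crossMul, mul_mul_crossMul, b_mul_crossMul, mul_zero, mul_zero]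
  refine hP.eq_zero_of_nuclear hR (h.associator_crossMul hR htf x y) (crossMul_mul x y x y)
    fun z => ?_
  have hcomm : crossMul a b x y * z = z * crossMul a b x y + crossMul a b (lieBr x y) z := by
    rw [← h.lieBr_crossMul hR, lieBr, add_sub_cancel]
  rw [hcomm, add_mul, mul_mul_crossMul, crossMul_mul, crossMul_mul, mul_zero, add_zero]

theorem mul_right (h : Orthogonal a b) (hR : IsAlternative R)
    (hab : ∀ x y : R, crossMul a b x y = 0) (hba : ∀ x y : R, crossMul b a x y = 0) (x : R) :
    Orthogonal (a * x) b := by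
  refine hR.orthogonal (h.axb x) (h.b_ax x) (fun y => ?_) (fun y => ?_) fun y => ?_
  · rw [h.axyb hR, hba]
  · have e := hR.mul_mul_add_mul_mul_right (a * x) y b
    rw [h.axyb hR, hba, h.axb, zero_mul, h.ax_by hR, hab] at e
    simpa using e.symm
  · rw [h.symm.ax_by hR, hba]

theorem mul_left (h : Orthogonal a b) (hR : IsAlternative R)
    (hab : ∀ x y : R, crossMul a b x y = 0) (hba : ∀ x y : R, crossMul b a x y = 0) (x : R) :
    Orthogonal (x * a) b := by
  have xa_by (y : R) : x * a * (b * y) = 0 := by rw [h.symm.xb_ay hR, hba, neg_zero]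
  refine hR.orthogonal (h.xab x) (h.b_xa x) (fun y => ?_) (hab x) fun y => ?_
  · have e := hR.mul_mul_add_mul_mul_right (x * a) y b
    rw [h.xab, zero_mul, xa_by, add_zero, add_zero] at e
    exact e.trans (hab x y)
  · have e := hR.mul_mul_add_mul_mul_right (b * y) x a
    rw [h.symm.axyb hR, hab, h.bxa, zero_mul, h.symm.ax_by hR, hba] at e
    simpa using e.symm

theorem add_left {a' : R} (h : Orthogonal a b) (h' : Orthogonal a' b) : Orthogonal (a + a') b := by
  constructor <;> intros <;>
    simp only [add_mul, mul_add, h.ab, h.ba, h.axb, h.a_xb, h.a_bx, h.xab, h.bxa, h.b_xa, h.b_ax,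
      h.xba, h'.ab, h'.ba, h'.axb, h'.a_xb, h'.a_bx, h'.xab, h'.bxa, h'.b_xa, h'.b_ax, h'.xba,
      add_zero]

theorem neg_left (h : Orthogonal a b) : Orthogonal (-a) b := by
  constructor <;> intros <;>
    simp only [neg_mul, mul_neg, h.ab, h.ba, h.axb, h.a_xb, h.a_bx, h.xab, h.bxa, h.b_xa, h.b_ax,
      h.xba, neg_zero]

theorem zero_left (b : R) : Orthogonal 0 b := by
  constructor <;> intros <;> simp only [zero_mul, mul_zero]

theorem isTwoSidedIdealSet (hR : IsAlternative R) (htf : ThreeTorsionFree R)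
    (hP : IsPrimeRing R) (b : R) : IsTwoSidedIdealSet {a : R | Orthogonal a b} :=
  ⟨zero_left b, fun _ _ => add_left, fun _ => neg_left, fun x _ (h : Orthogonal _ b) =>
    have hab := h.crossMul_eq_zero hR htf hP
    have hba := h.symm.crossMul_eq_zero hR htf hP
    ⟨h.mul_left hR hab hba x, h.mul_right hR hab hba x⟩⟩

theorem eq_zero_or_eq_zero (h : Orthogonal a b) (hR : IsAlternative R)
    (htf : ThreeTorsionFree R) (hP : IsPrimeRing R) : a = 0 ∨ b = 0 :=
  hP.eq_zero_or_eq_zero_of_mul_eq_zero hR (isTwoSidedIdealSet hR htf hP b) h fun _ hp => hp.ab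

end Orthogonal

namespace IsAlternative

variable {R : Type*} [NonUnitalNonAssocRing R] {a b : R}

theorem mul_sandwich_eq_zero (hR : IsAlternative R) (ab : a * b = 0) (x : R) :
    a * (b * x * b) = 0 := by
  rw [← hR.right_moufang, ab, zero_mul, zero_mul]

theorem sandwich_mul_eq_zero (hR : IsAlternative R) (ba : b * a = 0) (x : R) :
    b * x * b * a = 0 := by
  rw [← hR.left_moufang, ba, mul_zero, mul_zero]

theorem mul_mul_sandwich_self_eq_zero (hR : IsAlternative R) (axb : ∀ x : R, a * x * b = 0)
    (ab : a * b = 0) (ba : b * a = 0) (x : R) : x * a * (b * x * b) = 0 := by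
  have a_bx (x : R) : a * (b * x) = -(a * (x * b)) := by
    have e := hR.mul_mul_add_mul_mul_right a x b
    rw [axb, ab, zero_mul, add_zero] at e
    exact (neg_eq_of_add_eq_zero_right e.symm).symm
  have hmoufang := hR.middle_moufang_add b x a (b * x)
  have b_a_bx : b * (a * (b * x)) = 0 := by rw [hR.left_moufang, ba, zero_mul, zero_mul]
  rw [ba, zero_mul, add_zero, b_a_bx, zero_mul, add_zero] at hmoufang
  calc
    x * a * (b * x * b) = x * (a * (b * x)) * b := hmoufang
    _ = -(x * (a * (x * b)) * b) := by rw [a_bx, mul_neg, neg_mul]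
    _ = -(x * (a * (x * b * b))) := by rw [hR.left_moufang, hR.2, ← hR.left_moufang, ← hR.2]
    _ = x * (a * (b * x * b)) := by rw [← mul_neg, ← a_bx, hR.flexible]
    _ = 0 := by rw [hR.mul_sandwich_eq_zero ab, mul_zero]

theorem mul_mul_sandwich_swap (hR : IsAlternative R) (axb : ∀ x : R, a * x * b = 0)
    (ab : a * b = 0) (ba : b * a = 0) (x y : R) :
    x * a * (b * y * b) = -(y * a * (b * x * b)) := by
  have hadd := hR.mul_mul_sandwich_self_eq_zero axb ab ba (x + y)
  simp only [add_mul, mul_add, hR.mul_mul_sandwich_self_eq_zero axb ab ba, zero_add,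
    add_zero] at hadd
  exact eq_neg_of_add_eq_zero_right hadd

theorem mul_mul_mul_swap (hR : IsAlternative R) (axb : ∀ x : R, a * x * b = 0) (x y : R) :
    a * x * y * b = -(a * y * x * b) := by
  have e := congrArg (· * b) (hR.mul_mul_add_mul_mul_right a x y)
  simp only [add_mul, axb, add_zero] at e
  exact eq_neg_of_add_eq_zero_left e

theorem mul_mul_mul_sandwich_eq_zero (hR : IsAlternative R) (axb : ∀ x : R, a * x * b = 0)
    (x y : R) : a * x * y * (b * y * b) = 0 :=
  calc
    a * x * y * (b * y * b) = a * x * (y * b * y) * b := by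
      rw [← hR.right_moufang b, hR.right_moufang y]
    _ = -(a * (y * b * y) * x * b) := hR.mul_mul_mul_swap axb _ _
    _ = 0 := by rw [← hR.right_moufang y, axb, zero_mul, zero_mul, zero_mul, neg_zero]

end IsAlternative

/-- `R` is nondegenerate if it has no nonzero absolute zero divisors, that is, no `c ≠ 0` with
`c x c = 0` for all `x`. -/
def IsNondegenerate (R : Type*) [NonUnitalNonAssocRing R] : Prop :=
  ∀ c : R, (∀ x : R, c * x * c = 0) → c = 0

theorem IsPrimeRing.isNondegenerate {R : Type*} [NonUnitalNonAssocRing R]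
    (hP : IsPrimeRing R) (hR : IsAlternative R) (htf : ThreeTorsionFree R) : IsNondegenerate R := by
  have eq_zero_of_sq {c : R} (hsq : c * c = 0) (hc : ∀ x : R, c * x * c = 0) : c = 0 := by
    have hself : Orthogonal c c :=
      hR.orthogonal hsq hsq hc (fun x => by rw [← hR.flexible, hc]) hc
    exact or_self_iff.mp (hself.eq_zero_or_eq_zero hR htf hP)
  intro c hc
  have hsq : c * c = 0 := by
    refine eq_zero_of_sq ?_ fun x => ?_
    · rw [← hR.2, hc, zero_mul]
    · rw [← hR.2, hR.1, hc, zero_mul]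
  exact eq_zero_of_sq hsq hc

namespace IsNondegenerate

variable {R : Type*} [NonUnitalNonAssocRing R] {a b : R}

theorem mul_eq_zero_of_mul_mul_eq_zero (hN : IsNondegenerate R) (hR : IsAlternative R)
    (axb : ∀ x : R, a * x * b = 0) : a * b = 0 :=
  hN _ fun x => by rw [hR.mul_mul_mul_self_eq_right, hR.flexible, axb]

theorem mul_swap_eq_zero_of_mul_mul_eq_zero (hN : IsNondegenerate R) (hR : IsAlternative R)
    (axb : ∀ x : R, a * x * b = 0) : b * a = 0 :=
  hN _ fun x => by rw [hR.mul_mul_mul_self_eq_right, hR.flexible, axb, mul_zero, zero_mul]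

theorem mul_mul_eq_zero_of_mul_mul_eq_zero (hN : IsNondegenerate R) (hR : IsAlternative R)
    (axb : ∀ x : R, a * x * b = 0) (ab : a * b = 0) (ba : b * a = 0) (x : R) :
    x * a * b = 0 := by
  have z_xa_a_bxb (z : R) : z * (x * a) * a * (b * x * b) = 0 := by
    have hassoc : z * (x * a) = z * x * a - a * z * x + a * (z * x) := by
      have e := hR.associator_rotate a z x
      simp only [associator_apply] at e
      linear_combination (norm := abel) e
    have hz : z * (x * a) * (b * x * b) = z * x * a * (b * x * b) := by
      rw [hassoc, add_mul, sub_mul, hR.mul_mul_mul_sandwich_eq_zero axb,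
        hR.mul_sandwich_eq_zero (axb _), sub_zero, add_zero]
    have e := hR.mul_mul_add_mul_mul_right (z * (x * a)) a (b * x * b)
    rwa [hz, hR.right_moufang, hR.mul_sandwich_eq_zero ab, hR.sandwich_mul_eq_zero ba, zero_mul,
      mul_zero, mul_zero, add_zero, add_zero] at e
  refine hN _ fun z => ?_
  rw [hR.mul_mul_mul_self_eq_left, hR.mul_mul_sandwich_swap axb ab ba, z_xa_a_bxb, neg_zero]

theorem orthogonal_of_mul_mul_eq_zero (hN : IsNondegenerate R) (hR : IsAlternative R)
    (axb : ∀ x : R, a * x * b = 0) : Orthogonal a b := by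
  have ab := hN.mul_eq_zero_of_mul_mul_eq_zero hR axb
  have ba := hN.mul_swap_eq_zero_of_mul_mul_eq_zero hR axb
  have xa_byb (x y : R) : x * a * (b * y * b) = 0 :=
    hN.mul_mul_eq_zero_of_mul_mul_eq_zero hR (fun u => hR.mul_sandwich_eq_zero (axb u) y)
      (hR.mul_sandwich_eq_zero ab y) (hR.sandwich_mul_eq_zero ba y) x
  have xab (x : R) : associator x a b = 0 := by
    rw [associator_apply, hN.mul_mul_eq_zero_of_mul_mul_eq_zero hR axb ab ba, ab, mul_zero,
      sub_zero]
  have axb_assoc (x : R) : associator a x b = 0 := by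
    rw [hR.associator_swap_left, xab, neg_zero]
  have a_xb (x : R) : a * (x * b) = 0 := by rw [← sub_eq_zero.mp (axb_assoc x), axb]
  have bxa_assoc (x : R) : associator b x a = 0 := by
    rw [hR.associator_swap_outer, axb_assoc, neg_zero]
  have bxa_eq (x : R) : b * x * a = b * (x * a) := sub_eq_zero.mp (bxa_assoc x)
  have bxa_yb (x y : R) : b * x * a * (y * b) = 0 :=
    calc
      b * x * a * (y * b) = -(y * a * (b * x * b)) := hR.crossMul_swap a_xb xab (b * x) y
      _ = 0 := by rw [xa_byb, neg_zero]
  have bxa (x : R) : b * x * a = 0 := hN _ fun y => by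
    rw [bxa_eq, hR.mul_mul_mul_self_eq_right, ← hR.middle_moufang, ← bxa_eq, bxa_yb, zero_mul]
  exact hR.orthogonal ab ba axb a_xb bxa

end IsNondegenerate

theorem prime_iff_aRb
    {R : Type*} [NonUnitalNonAssocRing R]
    (hR : IsAlternative R) (htf : ThreeTorsionFree R) :
    IsPrimeRing R ↔ ∀ a b : R, (∀ x : R, a * x * b = 0) → a = 0 ∨ b = 0 := by
  refine ⟨fun hP a b axb => ?_, isPrimeRing_of_forall_mul_mul_eq_zero⟩
  have hab : Orthogonal a b := (hP.isNondegenerate hR htf).orthogonal_of_mul_mul_eq_zero hR axb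
  exact hab.eq_zero_or_eq_zero hR htf hP
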